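/- arXiv:2605.24507 — 5 statements merged into one kernel-verified Lean document; each statement's English description precedes it below -/
import Mathlib

section
/- Let k be a field of characteristic zero, let ℓ ≥ 4 and n ≥ ℓ, and let [n] = V_1 ⊔ … ⊔ V_{ℓ−2} be any partition into ℓ−2 nonempty parts. Then the Vandermonde-type product F = ∏_{s=1}^{ℓ−2} ∏_{a<b, a,b ∈ V_s} (x_a − x_b) belongs to DI(n,ℓ): for every i ∈ [n] and every 0 ≤ j ≤ n−3, the derivative ∂^j F/∂x_i^j vanishes whenever any ℓ of the variables are identified. -/
open MvPolynomial

/-- `p` vanishes whenever any `ℓ` of the variables are identified: for every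
`ℓ`-subset `L` of the variables, substituting a single common variable
(`X a` for `a ∈ L`) for all variables indexed by `L` gives `0`. -/
def identVanish (k : Type*) [Field k] (n ℓ : ℕ) (p : MvPolynomial (Fin n) k) : Prop :=
  ∀ L : Finset (Fin n), L.card = ℓ → ∀ a ∈ L,
    (aeval (fun i => if i ∈ L then (X a : MvPolynomial (Fin n) k) else X i)) p = 0

/-- Membership in Mubayi's differentiated diagonal ideal `DI(n,ℓ)`:
all derivatives `∂^j p/∂x_i^j` for `i ∈ [n]`, `0 ≤ j ≤ n-3` lie in `I(n,ℓ)`. -/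
def memDI (k : Type*) [Field k] (n ℓ : ℕ) (p : MvPolynomial (Fin n) k) : Prop :=
  ∀ i : Fin n, ∀ j : ℕ, j ≤ n - 3 →
    identVanish k n ℓ ((fun q => pderiv i q)^[j] p)

/-!
Differentiating in `x_i` leaves the factors of `F` not involving `x_i` untouched. Given an
`ℓ`-set `L`, at least `ℓ - 1` of its elements differ from `i`, and there are only `ℓ - 2` parts, so
two of these elements `u`, `v` share a part. Hence the factor `x_u - x_v` of `F` survives every
`∂^j/∂x_i^j`, and it vanishes as soon as the variables indexed by `L` are identified.
-/

theorem dvd_iterate_derivation {R A : Type*} [CommSemiring R] [CommSemiring A] [Algebra R A]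
    (D : Derivation R A A) {a b : A} (ha : D a = 0) (hab : a ∣ b) (j : ℕ) : a ∣ D^[j] b := by
  induction j with
  | zero => exact hab
  | succ j ih =>
    obtain ⟨c, hc⟩ := ih
    exact ⟨D c, by simp [Function.iterate_succ_apply', hc, ha]⟩

theorem X_sub_X_dvd_iterate_pderiv {R σ : Type*} [CommRing R] {i u v : σ} (hu : u ≠ i)
    (hv : v ≠ i) {p : MvPolynomial σ R} (h : X u - X v ∣ p) (j : ℕ) :
    X u - X v ∣ (pderiv i)^[j] p :=
  dvd_iterate_derivation (pderiv i)
    (by rw [map_sub, pderiv_X_of_ne hu, pderiv_X_of_ne hv, sub_zero]) h j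

theorem identVanish_of_forall_exists_X_sub_X_dvd {k : Type*} [Field k] {n ℓ : ℕ}
    {p : MvPolynomial (Fin n) k}
    (h : ∀ L : Finset (Fin n), L.card = ℓ → ∃ u ∈ L, ∃ v ∈ L, X u - X v ∣ p) :
    identVanish k n ℓ p := by
  intro L hL a _
  obtain ⟨u, hu, v, hv, q, rfl⟩ := h L hL
  rw [map_mul, map_sub, aeval_X, aeval_X, if_pos hu, if_pos hv, sub_self, zero_mul]

theorem exists_ne_common_related_of_card_lt {α ι : Type*} [Fintype ι] {r : α → ι → Prop}
    {S : Finset α} (hr : ∀ x ∈ S, ∃ s, r x s) (hS : Fintype.card ι < S.card) :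
    ∃ u ∈ S, ∃ v ∈ S, u ≠ v ∧ ∃ s, r u s ∧ r v s := by
  choose f hf using hr
  obtain ⟨u, v, huv, hfuv⟩ :=
    Fintype.exists_ne_map_eq_of_card_lt (fun x : S => f x x.2) (by rwa [Fintype.card_coe])
  exact ⟨u, u.2, v, v.2, Subtype.coe_ne_coe.mpr huv, f u u.2, hf u u.2, hfuv ▸ hf v v.2⟩

/-- The product over `s` of the Vandermonde products `∏ (x_a - x_b)`, `a < b` in `V s`. The sets
`V s` are allowed to overlap, in which case a factor occurs once for each `V s` containing the
pair. -/
noncomputable def vandermondeProd (R : Type*) {σ ι : Type*} [CommRing R] [Fintype σ]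
    [LinearOrder σ] [Fintype ι] (V : ι → Finset σ) : MvPolynomial σ R :=
  ∏ s, ∏ pr ∈ Finset.univ.filter (fun pr : σ × σ => pr.1 < pr.2 ∧ pr.1 ∈ V s ∧ pr.2 ∈ V s),
    (X pr.1 - X pr.2)

theorem X_sub_X_dvd_vandermondeProd {R σ ι : Type*} [CommRing R] [Fintype σ] [LinearOrder σ]
    [Fintype ι] {V : ι → Finset σ} {s : ι} {u v : σ} (huv : u ≠ v) (hu : u ∈ V s)
    (hv : v ∈ V s) : X u - X v ∣ vandermondeProd R V := by
  have dvd_of_lt {a b : σ} (hab : a < b) (ha : a ∈ V s) (hb : b ∈ V s) :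
      X a - X b ∣ vandermondeProd R V :=
    (Finset.dvd_prod_of_mem (fun pr : σ × σ => (X pr.1 - X pr.2 : MvPolynomial σ R))
      (Finset.mem_filter.mpr ⟨Finset.mem_univ (a, b), hab, ha, hb⟩)).trans
      (Finset.dvd_prod_of_mem _ (Finset.mem_univ s))
  rcases huv.lt_or_gt with h | h
  · exact dvd_of_lt h hu hv
  · rw [← neg_dvd, neg_sub]
    exact dvd_of_lt h hv hu

theorem vandermonde_partition_mem_DI_general (k : Type*) [Field k] {n ℓ : ℕ} {ι : Type*}
    [Fintype ι] (hι : Fintype.card ι + 1 < ℓ) (V : ι → Finset (Fin n))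
    (hcover : ∀ x, ∃ s, x ∈ V s) (i : Fin n) (j : ℕ) :
    identVanish k n ℓ ((pderiv i)^[j] (vandermondeProd k V)) := by
  refine identVanish_of_forall_exists_X_sub_X_dvd fun L hL => ?_
  have hcard : Fintype.card ι < (L.erase i).card := by
    have := Finset.pred_card_le_card_erase (s := L) (a := i)
    omega
  obtain ⟨u, hu, v, hv, huv, s, hus, hvs⟩ :=
    exists_ne_common_related_of_card_lt (fun x _ => hcover x) hcard
  obtain ⟨hui, huL⟩ := Finset.mem_erase.mp hu
  obtain ⟨hvi, hvL⟩ := Finset.mem_erase.mp hv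
  exact ⟨u, huL, v, hvL,
    X_sub_X_dvd_iterate_pderiv hui hvi (X_sub_X_dvd_vandermondeProd huv hus hvs) j⟩

/-- for `ℓ ≥ 4`, `n ≥ ℓ` and any partition of `[n]` into `ℓ-2`
nonempty parts `V_1, …, V_{ℓ-2}`, the Vandermonde-type product
`F = ∏_s ∏_{a<b ∈ V_s} (x_a - x_b)` lies in `DI(n,ℓ)`. -/
theorem vandermonde_partition_mem_DI (k : Type*) [Field k] [CharZero k] (n ℓ : ℕ)
    (hℓ : 4 ≤ ℓ) (hn : ℓ ≤ n) (V : Fin (ℓ - 2) → Finset (Fin n))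
    (hne : ∀ s, (V s).Nonempty)
    (hdisj : ∀ s t, s ≠ t → Disjoint (V s) (V t))
    (hcover : ∀ x : Fin n, ∃ s, x ∈ V s) :
    memDI k n ℓ
      (∏ s : Fin (ℓ - 2),
        ∏ pr ∈ Finset.univ.filter
            (fun pr : Fin n × Fin n => pr.1 < pr.2 ∧ pr.1 ∈ V s ∧ pr.2 ∈ V s),
          (X pr.1 - X pr.2)) := by
  intro i j _
  exact vandermonde_partition_mem_DI_general k (by rw [Fintype.card_fin]; omega) V hcover i j
end

section
/- Let r ≥ 0, let a, b be natural numbers with a ≥ b + 2, and let c = (c_1,…,c_m) be a tuple of natural numbers. Then e_r(c_1,…,c_m, a−1, b+1) − e_r(c_1,…,c_m, a, b) = (a − b − 1)·e_{r−2}(c_1,…,c_m), where e_d denotes the elementary symmetric polynomial of degree d evaluated at the given numbers (with the conventions e_0 = 1 and e_d = 0 for d < 0). -/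
/-- The elementary symmetric polynomial of degree `d` evaluated at the entries of a
multiset `s` of natural numbers: `e_d(s) = ∑_{T ⊆ s, |T| = d} ∏_{x ∈ T} x`. -/
def esymmNat (s : Multiset ℕ) (d : ℕ) : ℕ :=
  ((s.powersetCard d).map Multiset.prod).sum

/-! In degree at least two, `e_r(x, y, s) = e_r(s) + (x + y) e_{r-1}(s) + x y e_{r-2}(s)`, so moving
`t` from `x` to `y` preserves the sum and only the change `t (x - y - t)` of the product matters. -/

section Semiring

variable {R : Type*} [CommSemiring R]

theorem esymm_zero (s : Multiset R) : s.esymm 0 = 1 := by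
  simp [Multiset.esymm]

theorem esymm_one (s : Multiset R) : s.esymm 1 = s.sum := by
  simp [Multiset.esymm, Multiset.powersetCard_one]

theorem esymm_cons_succ (x : R) (s : Multiset R) (d : ℕ) :
    (x ::ₘ s).esymm (d + 1) = s.esymm (d + 1) + x * s.esymm d := by
  simp [Multiset.esymm, Multiset.powersetCard_cons, Multiset.sum_map_mul_left]

theorem esymm_cons_cons_add_two (x y : R) (s : Multiset R) (d : ℕ) :
    (x ::ₘ y ::ₘ s).esymm (d + 2) =
      s.esymm (d + 2) + (x + y) * s.esymm (d + 1) + x * y * s.esymm d := by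
  simp only [esymm_cons_succ]
  ring

theorem map_multiset_esymm {S : Type*} [CommSemiring S] (f : R →+* S) (s : Multiset R) (d : ℕ) :
    f (s.esymm d) = (s.map f).esymm d := by
  simp [Multiset.esymm, Multiset.powersetCard_map, map_multiset_sum, map_multiset_prod]

theorem natCast_esymmNat (s : Multiset ℕ) (d : ℕ) :
    (esymmNat s d : R) = (s.map (Nat.cast : ℕ → R)).esymm d :=
  map_multiset_esymm (Nat.castRingHom R) s d

end Semiring

theorem esymm_smoothing_general {R : Type*} [CommRing R] (s : Multiset R) (a b t : R) (r : ℕ) :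
    ((a - t) ::ₘ (b + t) ::ₘ s).esymm r - (a ::ₘ b ::ₘ s).esymm r =
      t * (a - b - t) * (if 2 ≤ r then s.esymm (r - 2) else 0) := by
  match r with
  | 0 => simp [esymm_zero]
  | 1 =>
    simp only [esymm_one, Multiset.sum_cons, Nat.not_ofNat_le_one, if_false]
    ring
  | d + 2 =>
    simp only [esymm_cons_cons_add_two, Nat.le_add_left, if_true, Nat.add_sub_cancel]
    ring

/-- for `a ≥ b + 2` and a tuple `c = (c_1, …, c_m)` of naturals,
`e_r(c, a-1, b+1) - e_r(c, a, b) = (a - b - 1) · e_{r-2}(c)`,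
with the conventions `e_0 = 1` and `e_d = 0` for `d < 0` (so the right-hand factor
is `0` when `r < 2`). -/
theorem esymm_smoothing (m r a b : ℕ) (hab : b + 2 ≤ a) (c : Fin m → ℕ) :
    (esymmNat ((a - 1) ::ₘ (b + 1) ::ₘ Multiset.map c Finset.univ.val) r : ℤ) -
        (esymmNat (a ::ₘ b ::ₘ Multiset.map c Finset.univ.val) r : ℤ) =
      ((a : ℤ) - b - 1) *
        (if 2 ≤ r then (esymmNat (Multiset.map c Finset.univ.val) (r - 2) : ℤ) else 0) := by
  have cast_pred : ((a - 1 : ℕ) : ℤ) = a - 1 := Nat.cast_pred (by lia)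
  simpa only [natCast_esymmNat, Multiset.map_cons, cast_pred, Nat.cast_succ, one_mul] using
    esymm_smoothing_general ((Multiset.map c Finset.univ.val).map (Nat.cast : ℕ → ℤ)) a b 1 r
end

section
/- Let G be a simple graph on vertex set [n] with no clique of size q+1, and let u ≠ v be nonadjacent vertices of G. Let G' be the graph obtained from G by replacing v with a clone of u: the edges of G' not incident to v are exactly those of G, and v is adjacent in G' exactly to the neighbors of u in G (in particular u and v remain nonadjacent). Then G' has no clique of size q+1, and for every r ≥ 1, (number of r-cliques of G') − (number of r-cliques of G) = (number of (r−1)-cliques of G contained in the neighborhood N_G(u)) − (number of (r−1)-cliques of G contained in N_G(v)). In particular, if the first clique count is at least the second, the number of r-cliques does not decrease. -/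
/-!
Split the `(r + 1)`-cliques of a graph according to whether they contain `v`: those that do
correspond, by removing `v`, to the `r`-cliques inside the neighbourhood of `v`. Replacing `v` by a
clone of `u` leaves the cliques avoiding `v` untouched and, since `u` and `v` are nonadjacent, turns
the neighbourhood of `v` into that of `u`, on which the graph has not changed. Comparing the two
splittings gives the identity. No larger clique appears: one through `v` misses `u`, and exchanging
`v` for `u` makes it a clique of the original graph.
-/

open SimpleGraph

variable {V : Type*} {G G' : SimpleGraph V} {A : Set V} {u v : V}

/-- The `r`-cliques of `G` contained in `A`, the analogue of `SimpleGraph.cliqueSet` for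
`SimpleGraph.CliqueFreeOn`. It serves both for `A` the neighbourhood of a vertex and for `A` the
complement of a vertex. -/
def cliqueSetOn (G : SimpleGraph V) (A : Set V) (r : ℕ) : Set (Finset V) :=
  {s | G.IsNClique r s ∧ ∀ x ∈ s, x ∈ A}

theorem cliqueSetOn_congr (h : ∀ x ∈ A, ∀ y ∈ A, G.Adj x y ↔ G'.Adj x y) (r : ℕ) :
    cliqueSetOn G A r = cliqueSetOn G' A r := by
  ext s
  refine and_congr_left fun hsA => ?_
  rw [isNClique_iff, isNClique_iff]
  refine and_congr_left fun _ => forall₂_congr fun x hx => forall₂_congr fun y hy => ?_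
  rw [h x (hsA x hx) y (hsA y hy)]

theorem bijOn_insert_cliqueSetOn_neighborSet [DecidableEq V] (G : SimpleGraph V) (v : V) (r : ℕ) :
    Set.BijOn (insert v) (cliqueSetOn G (G.neighborSet v) r) {s ∈ G.cliqueSet (r + 1) | v ∈ s} := by
  refine (Finset.insert_erase_invOn.symm.mono (fun s hs hv => G.irrefl (hs.2 v hv))
    fun s hs => hs.2).bijOn ?_ ?_
  · exact fun s hs => ⟨hs.1.insert hs.2, Finset.mem_insert_self v s⟩
  · rintro s ⟨hs, hv⟩
    refine ⟨hs.erase_of_mem hv, fun x hx => ?_⟩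
    obtain ⟨hxv, hxs⟩ := Finset.mem_erase.1 hx
    exact hs.isClique hv hxs hxv.symm

theorem encard_cliqueSet_succ (G : SimpleGraph V) (v : V) (r : ℕ) :
    (G.cliqueSet (r + 1)).encard =
      (cliqueSetOn G {v}ᶜ (r + 1)).encard + (cliqueSetOn G (G.neighborSet v) r).encard := by
  classical
  have hbij := bijOn_insert_cliqueSetOn_neighborSet G v r
  have havoid : cliqueSetOn G {v}ᶜ (r + 1) = G.cliqueSet (r + 1) \ {s | v ∈ s} := by
    ext s
    exact and_congr_right fun _ => ⟨fun h hv => h v hv rfl, fun h x hx hxv => h (hxv ▸ hx)⟩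
  rw [← hbij.injOn.encard_image, hbij.image_eq, havoid]
  exact (Set.encard_sdiff_add_encard_inter _ _).symm

section ReplaceVertex

variable [DecidableEq V]

theorem adj_replaceVertex_iff (h : ¬G.Adj u v) (x y : V) :
    (G.replaceVertex u v).Adj x y ↔
      ((x ≠ v ∧ y ≠ v ∧ G.Adj x y) ∨ (x = v ∧ G.Adj u y) ∨ (y = v ∧ G.Adj u x)) := by
  by_cases hx : x = v <;> by_cases hy : y = v <;> simp [replaceVertex, hx, hy, h, G.adj_comm u]

theorem neighborSet_replaceVertex_right (h : ¬G.Adj u v) :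
    (G.replaceVertex u v).neighborSet v = G.neighborSet u := by
  ext y
  obtain rfl | hy := eq_or_ne y v
  · simp [h]
  · exact G.adj_replaceVertex_iff_of_ne_right u hy

theorem cliqueSetOn_replaceVertex (G : SimpleGraph V) (u : V) (hv : v ∉ A) (r : ℕ) :
    cliqueSetOn (G.replaceVertex u v) A r = cliqueSetOn G A r :=
  cliqueSetOn_congr (fun _ hx _ hy =>
    G.adj_replaceVertex_iff_of_ne u (ne_of_mem_of_not_mem hx hv) (ne_of_mem_of_not_mem hy hv)) r

theorem encard_cliqueSet_replaceVertex_succ (h : ¬G.Adj u v) (r : ℕ) :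
    ((G.replaceVertex u v).cliqueSet (r + 1)).encard =
      (cliqueSetOn G {v}ᶜ (r + 1)).encard + (cliqueSetOn G (G.neighborSet u) r).encard := by
  rw [encard_cliqueSet_succ _ v, neighborSet_replaceVertex_right h,
    cliqueSetOn_replaceVertex G u (show v ∉ {v}ᶜ by simp),
    cliqueSetOn_replaceVertex G u (show v ∉ G.neighborSet u from h)]

end ReplaceVertex

theorem clone_cliqueFree_and_count_general (q : ℕ) (hfree : G.CliqueFree (q + 1))
    (hG' : ∀ x y, G'.Adj x y ↔
      ((x ≠ v ∧ y ≠ v ∧ G.Adj x y) ∨ (x = v ∧ G.Adj u y) ∨ (y = v ∧ G.Adj u x))) :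
    G'.CliqueFree (q + 1) ∧
      ∀ r : ℕ, 1 ≤ r →
        ((G'.cliqueSet r).encard + (cliqueSetOn G (G.neighborSet v) (r - 1)).encard =
          (G.cliqueSet r).encard + (cliqueSetOn G (G.neighborSet u) (r - 1)).encard) ∧
        ((cliqueSetOn G (G.neighborSet v) (r - 1)).encard ≤
            (cliqueSetOn G (G.neighborSet u) (r - 1)).encard →
          (G.cliqueSet r).encard ≤ (G'.cliqueSet r).encard) := by
  classical
  have hnadj : ¬G.Adj u v := fun h => G'.irrefl ((hG' v v).2 (.inr (.inl ⟨rfl, h⟩)))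
  obtain rfl : G' = G.replaceVertex u v := by
    ext x y
    rw [hG', adj_replaceVertex_iff hnadj]
  refine ⟨hfree.replaceVertex u v, fun r hr => ?_⟩
  obtain ⟨k, rfl⟩ := Nat.exists_eq_add_of_le' hr
  rw [Nat.add_sub_cancel, encard_cliqueSet_replaceVertex_succ hnadj, encard_cliqueSet_succ G v]
  exact ⟨add_right_comm _ _ _, fun h => by gcongr⟩

/-- cloning a vertex in a `K_{q+1}`-free graph. Let `G` be a
`K_{q+1}`-free graph on `[n]`, `u ≠ v` nonadjacent, and let `G'` be obtained from
`G` by replacing `v` with a clone of `u` (edges not incident to `v` unchanged, and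
`v` adjacent in `G'` exactly to the `G`-neighbours of `u`). Then `G'` is
`K_{q+1}`-free; for every `r ≥ 1` the clique counts satisfy
`#(r-cliques of G') - #(r-cliques of G)
  = #((r-1)-cliques of G in N_G(u)) - #((r-1)-cliques of G in N_G(v))`
(stated additively); and in particular if the count in `N_G(u)` is at least that
in `N_G(v)` then the number of `r`-cliques does not decrease. -/
theorem clone_cliqueFree_and_count (n q : ℕ) (G G' : SimpleGraph (Fin n))
    (hfree : G.CliqueFree (q + 1)) (u v : Fin n) (huv : u ≠ v) (hnadj : ¬G.Adj u v)
    (hG' : ∀ x y : Fin n, G'.Adj x y ↔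
      ((x ≠ v ∧ y ≠ v ∧ G.Adj x y) ∨ (x = v ∧ G.Adj u y) ∨ (y = v ∧ G.Adj u x))) :
    G'.CliqueFree (q + 1) ∧
      ∀ r : ℕ, 1 ≤ r →
        ({s : Finset (Fin n) | G'.IsNClique r s}.ncard +
            {s : Finset (Fin n) | G.IsNClique (r - 1) s ∧ ∀ x ∈ s, G.Adj v x}.ncard =
          {s : Finset (Fin n) | G.IsNClique r s}.ncard +
            {s : Finset (Fin n) | G.IsNClique (r - 1) s ∧ ∀ x ∈ s, G.Adj u x}.ncard) ∧
        ({s : Finset (Fin n) | G.IsNClique (r - 1) s ∧ ∀ x ∈ s, G.Adj v x}.ncard ≤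
            {s : Finset (Fin n) | G.IsNClique (r - 1) s ∧ ∀ x ∈ s, G.Adj u x}.ncard →
          {s : Finset (Fin n) | G.IsNClique r s}.ncard ≤
            {s : Finset (Fin n) | G'.IsNClique r s}.ncard) := by
  simpa only [← (Set.toFinite _).cast_ncard_eq, ← Nat.cast_add, Nat.cast_inj, Nat.cast_le,
    cliqueSet, cliqueSetOn, mem_neighborSet] using clone_cliqueFree_and_count_general q hfree hG'
end

section
/- Let n, ℓ, r ≥ 2 and let R = k[y_E : E ∈ C([n],r)] be the polynomial ring over a field k with one variable per r-subset of [n]. Then the cover ideal of Mubayi's family equals the missing codegree-star ideal: ⋂_H (y_E : E ∈ H), the intersection over all copies H ⊆ C([n],r) of members of K_ℓ^{(r)}, equals J^{(r)}_{n,ℓ} := ⋂_{L ∈ C([n],ℓ)} ( u^{(r)}_{ab} : {a,b} ⊆ L ), where u^{(r)}_{ab} = ∏_{E ∈ C([n],r), {a,b} ⊆ E} y_E. -/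
open MvPolynomial

/-- `H` is a copy of the hypergraph `H₀` inside the `r`-subsets of `[n]`: the image
of the edge set of `H₀` under a map injective on the vertex set of `H₀`. -/
def IsHypCopy {n : ℕ} (H₀ : Finset (Finset ℕ)) (H : Finset (Finset (Fin n))) : Prop :=
  ∃ f : ℕ → Fin n, Set.InjOn f ↑(H₀.sup id) ∧ H = H₀.image (Finset.image f)

/-- `H₀` is a member of Mubayi's family `K_ℓ^{(r)}`: an `r`-uniform hypergraph with
at most `C(ℓ,2)` edges containing a core `S` of `ℓ` vertices every pair of which
lies in an edge. -/
def MubayiMember (ℓ r : ℕ) (H₀ : Finset (Finset ℕ)) : Prop :=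
  (∀ e ∈ H₀, e.card = r) ∧ H₀.card ≤ Nat.choose ℓ 2 ∧
    ∃ S : Finset ℕ, S.card = ℓ ∧
      ∀ a ∈ S, ∀ b ∈ S, a ≠ b → ∃ e ∈ H₀, a ∈ e ∧ b ∈ e

/-- The missing codegree-star monomial `u^{(r)}_{ab} = ∏_{E ⊇ {a,b}} y_E` in the
edge-variable ring `k[y_E : E ∈ C([n],r)]`. -/
noncomputable def starMonomial (k : Type*) [Field k] (n r : ℕ) (a b : Fin n) :
    MvPolynomial {E : Finset (Fin n) // E.card = r} k :=
  ∏ e ∈ Finset.univ.filter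
      (fun e : {E : Finset (Fin n) // E.card = r} => a ∈ e.val ∧ b ∈ e.val),
    X e

/-- The missing codegree-star ideal
`J^{(r)}_{n,ℓ} = ⋂_{L ∈ C([n],ℓ)} (u^{(r)}_{ab} : {a,b} ⊆ L)`. -/
noncomputable def codegreeStarIdeal (k : Type*) [Field k] (n ℓ r : ℕ) :
    Ideal (MvPolynomial {E : Finset (Fin n) // E.card = r} k) :=
  ⨅ (L : Finset (Fin n)) (_ : L.card = ℓ),
    Ideal.span {p | ∃ a ∈ L, ∃ b ∈ L, a ≠ b ∧ p = starMonomial k n r a b}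

/-!
A polynomial lies in the ideal generated by the squarefree monomials `∏_{e ∈ A i} y_e` iff the
support of each of its terms contains some `A i`; by the axiom of choice, a set contains some `A i`
iff it meets the range of every choice function `t i ∈ A i`. So this ideal is the intersection of
the ideals `(y_{t i} : i)`. When the `A i` are the codegree stars of the pairs in an `ℓ`-set `L`,
choosing an edge `t i ⊇ {a, b}` for every pair produces an `r`-graph with core `L` and at most
`C(ℓ, 2)` edges, and every member of Mubayi's family contains the range of such a choice.
-/

section SquarefreeMonomialIdeal

variable {ι σ R : Type*} [CommSemiring R]

lemma exists_subset_iff_forall_choice_mem {A : ι → Set σ} {B : Set σ} :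
    (∃ i, A i ⊆ B) ↔ ∀ t : ι → σ, (∀ i, t i ∈ A i) → ∃ i, t i ∈ B := by
  refine ⟨fun ⟨i, hi⟩ t ht ↦ ⟨i, hi (ht i)⟩, fun h ↦ ?_⟩
  by_contra! hAB
  choose t htA htB using fun i ↦ Set.not_subset.1 (hAB i)
  obtain ⟨i, hi⟩ := h t htA
  exact htB i hi

lemma indicator_one_le_iff_subset_support {A : Finset σ} {m : σ →₀ ℕ} :
    Finsupp.indicator A (fun _ _ ↦ 1) ≤ m ↔ A ⊆ m.support := by
  classical
  refine forall_congr' fun e ↦ ?_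
  by_cases he : e ∈ A <;> simp [Finsupp.indicator_apply, he, Nat.one_le_iff_ne_zero]

lemma mem_span_range_prod_X_iff {A : ι → Finset σ} {p : MvPolynomial σ R} :
    p ∈ Ideal.span (Set.range fun i ↦ ∏ e ∈ A i, X e) ↔
      ∀ m ∈ p.support, ∃ i, A i ⊆ m.support := by
  have hmonomial : (Set.range fun i ↦ ∏ e ∈ A i, (X e : MvPolynomial σ R)) =
      (fun m ↦ monomial m 1) '' Set.range fun i ↦ Finsupp.indicator (A i) fun _ _ ↦ 1 := by
    rw [← Set.range_comp]
    congr! 2 with i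
    simpa using prod_X_pow (R := R) (fun _ ↦ 1) (A i)
  simp only [hmonomial, mem_ideal_span_monomial_image, Set.exists_range_iff,
    indicator_one_le_iff_subset_support]

theorem span_range_prod_X_eq_iInf (A : ι → Finset σ) :
    Ideal.span (Set.range fun i ↦ ∏ e ∈ A i, (X e : MvPolynomial σ R)) =
      ⨅ (t : ι → σ) (_ : ∀ i, t i ∈ A i), Ideal.span (X '' Set.range t) := by
  ext p
  simp only [mem_span_range_prod_X_iff, Submodule.mem_iInf, mem_ideal_span_X_image,
    Set.exists_range_iff, ← Finsupp.mem_support_iff, ← Finset.coe_subset]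
  simp only [exists_subset_iff_forall_choice_mem, Finset.mem_coe]
  exact ⟨fun h t ht m hm ↦ h m hm t ht, fun h m hm t ht ↦ h t ht m hm⟩

end SquarefreeMonomialIdeal

section CoreHypergraph

variable {V W : Type*} {s ℓ r : ℕ}

/-- `H` is an `r`-uniform hypergraph on `V` with at most `C(ℓ,s)` edges that contains a core of
`ℓ` vertices every `s` of which lie in an edge. For `s = 2 ≤ ℓ` these are the copies of the members
of Mubayi's family `K_ℓ^{(r)}`, described without reference to an ambient vertex set. -/
def IsCoreHypergraph (s ℓ r : ℕ) (H : Finset (Finset V)) : Prop :=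
  (∀ e ∈ H, e.card = r) ∧ H.card ≤ ℓ.choose s ∧
    ∃ L : Finset V, L.card = ℓ ∧ ∀ T ∈ L.powersetCard s, ∃ e ∈ H, T ⊆ e

lemma IsCoreHypergraph.exists_choice {H : Finset (Finset V)} (hH : IsCoreHypergraph s ℓ r H) :
    ∃ L : Finset V, L.card = ℓ ∧ ∃ t : L.powersetCard s → {E : Finset V // E.card = r},
      ∀ T, T.1 ⊆ (t T).1 ∧ (t T).1 ∈ H := by
  obtain ⟨hr, -, L, hL, hcore⟩ := hH
  choose t htH hTt using fun T : L.powersetCard s ↦ hcore T.1 T.2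
  exact ⟨L, hL, fun T ↦ ⟨t T, hr _ (htH T)⟩, fun T ↦ ⟨hTt T, htH T⟩⟩

variable [DecidableEq V] [DecidableEq W]

/-- The codegree star of `T` in the complete `r`-uniform hypergraph on `V`: the edges
containing `T`, as elements of the index type of the edge variables. -/
def codegreeStar [Fintype V] (r : ℕ) (T : Finset V) : Finset {E : Finset V // E.card = r} :=
  Finset.univ.filter (T ⊆ ·.1)

lemma mem_codegreeStar [Fintype V] {T : Finset V} {e : {E : Finset V // E.card = r}} :
    e ∈ codegreeStar r T ↔ T ⊆ e.1 := by
  simp [codegreeStar]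

lemma isCoreHypergraph_image_choice {L : Finset V} (hL : L.card = ℓ)
    (t : L.powersetCard s → {E : Finset V // E.card = r}) (ht : ∀ T, T.1 ⊆ (t T).1) :
    IsCoreHypergraph s ℓ r (Finset.univ.image fun T ↦ (t T).1) := by
  refine ⟨Finset.forall_mem_image.2 fun T _ ↦ (t T).2, ?_, L, hL, fun T hT ↦
    ⟨t ⟨T, hT⟩, Finset.mem_image_of_mem _ (Finset.mem_univ _), ht ⟨T, hT⟩⟩⟩
  calc (Finset.univ.image fun T ↦ (t T).1).card
      ≤ (Finset.univ : Finset (L.powersetCard s)).card := Finset.card_image_le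
    _ = ℓ.choose s := by simp [hL]

lemma subset_sup_id_of_forall_powersetCard {H : Finset (Finset V)} {L : Finset V}
    (hs : s ≠ 0) (hsL : s ≤ L.card) (hcore : ∀ T ∈ L.powersetCard s, ∃ e ∈ H, T ⊆ e) :
    L ⊆ H.sup id := by
  intro x hx
  obtain ⟨T, hxT, hTL, hT⟩ := Finset.exists_subsuperset_card_eq
    (Finset.singleton_subset_iff.2 hx) (by simpa [Nat.one_le_iff_ne_zero]) hsL
  obtain ⟨e, he, hTe⟩ := hcore T (Finset.mem_powersetCard.2 ⟨hTL, hT⟩)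
  exact Finset.mem_sup.2 ⟨e, he, hTe (Finset.singleton_subset_iff.1 hxT)⟩

lemma IsCoreHypergraph.image {H : Finset (Finset V)} {f : V → W} (hH : IsCoreHypergraph s ℓ r H)
    (hs : s ≠ 0) (hsℓ : s ≤ ℓ) (hf : Set.InjOn f ↑(H.sup id)) :
    IsCoreHypergraph s ℓ r (H.image (Finset.image f)) := by
  obtain ⟨hr, hcard, L, rfl, hcore⟩ := hH
  have hLf : Set.InjOn f L := hf.mono (subset_sup_id_of_forall_powersetCard hs hsℓ hcore)
  refine ⟨Finset.forall_mem_image.2 fun e he ↦ ?_, Finset.card_image_le.trans hcard,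
    L.image f, Finset.card_image_of_injOn hLf, fun T hT ↦ ?_⟩
  · have hsub : e ⊆ H.sup id := Finset.le_sup (f := id) he
    rw [Finset.card_image_of_injOn (hf.mono hsub), hr e he]
  · obtain ⟨hTfL, hTs⟩ := Finset.mem_powersetCard.1 hT
    obtain ⟨T, hTL, rfl⟩ := Finset.subset_image_iff.1 hTfL
    rw [Finset.card_image_of_injOn (hLf.mono hTL)] at hTs
    obtain ⟨e, he, hTe⟩ := hcore T (Finset.mem_powersetCard.2 ⟨hTL, hTs⟩)
    exact ⟨e.image f, Finset.mem_image_of_mem _ he, Finset.image_subset_image hTe⟩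

theorem mubayi_coverIdeal_eq_codegreeStarIdeal_general (R : Type*) [CommSemiring R] [Fintype V]
    (s ℓ r : ℕ) :
    (⨅ (H : Finset (Finset V)) (_ : IsCoreHypergraph s ℓ r H),
      Ideal.span (X '' {e : {E : Finset V // E.card = r} | e.1 ∈ H})) =
    ⨅ (L : Finset V) (_ : L.card = ℓ),
      Ideal.span (Set.range fun T : L.powersetCard s ↦
        ∏ e ∈ codegreeStar r T.1, (X e : MvPolynomial _ R)) := by
  simp only [span_range_prod_X_eq_iInf, mem_codegreeStar]
  apply le_antisymm
  · refine le_iInf₂ fun L hL ↦ le_iInf₂ fun t ht ↦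
      iInf₂_le_of_le _ (isCoreHypergraph_image_choice hL t ht) ?_
    gcongr
    intro e he
    simpa [Subtype.ext_iff] using he
  · refine le_iInf₂ fun H hH ↦ ?_
    obtain ⟨L, hL, t, ht⟩ := hH.exists_choice
    refine iInf₂_le_of_le L hL (iInf₂_le_of_le t (fun T ↦ (ht T).1) ?_)
    gcongr
    exact Set.range_subset_iff.2 fun T ↦ (ht T).2

end CoreHypergraph

section MubayiFamily

lemma mem_powersetCard_two_iff {V : Type*} [DecidableEq V] {L T : Finset V} :
    T ∈ L.powersetCard 2 ↔ ∃ a ∈ L, ∃ b ∈ L, a ≠ b ∧ T = {a, b} := by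
  rw [Finset.mem_powersetCard, Finset.card_eq_two]
  constructor
  · rintro ⟨hT, a, b, hab, rfl⟩
    exact ⟨a, hT (by simp), b, hT (by simp), hab, rfl⟩
  · rintro ⟨a, ha, b, hb, hab, rfl⟩
    exact ⟨by simp [Finset.insert_subset_iff, ha, hb], a, b, hab, rfl⟩

lemma mubayiMember_iff_isCoreHypergraph {ℓ r : ℕ} {H₀ : Finset (Finset ℕ)} :
    MubayiMember ℓ r H₀ ↔ IsCoreHypergraph 2 ℓ r H₀ := by
  have hpairs (S : Finset ℕ) : (∀ T ∈ S.powersetCard 2, ∃ e ∈ H₀, T ⊆ e) ↔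
      ∀ a ∈ S, ∀ b ∈ S, a ≠ b → ∃ e ∈ H₀, a ∈ e ∧ b ∈ e := by
    simp only [mem_powersetCard_two_iff]
    refine ⟨fun h a ha b hb hab ↦ ?_, ?_⟩
    · simpa [Finset.insert_subset_iff] using h {a, b} ⟨a, ha, b, hb, hab, rfl⟩
    · rintro h _ ⟨a, ha, b, hb, hab, rfl⟩
      simpa [Finset.insert_subset_iff] using h a ha b hb hab
  simp only [MubayiMember, IsCoreHypergraph, hpairs]

lemma isHypCopy_image_val {n : ℕ} [Nonempty (Fin n)] (H : Finset (Finset (Fin n))) :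
    IsHypCopy (H.image (Finset.image Fin.val)) H := by
  have hinv : Function.LeftInverse (Function.invFun Fin.val) (Fin.val : Fin n → ℕ) :=
    Function.leftInverse_invFun Fin.val_injective
  refine ⟨Function.invFun Fin.val, ?_, ?_⟩
  · refine Set.InjOn.mono (s₂ := Set.range (Fin.val : Fin n → ℕ)) (fun x hx ↦ ?_) ?_
    · obtain ⟨e, he, hxe⟩ := Finset.mem_sup.1 hx
      obtain ⟨e, -, rfl⟩ := Finset.mem_image.1 he
      obtain ⟨v, -, rfl⟩ := Finset.mem_image.1 hxe
      exact ⟨v, rfl⟩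
    · exact hinv.rightInvOn_range.injOn
  · simp [Finset.image_image, Function.comp_def, hinv _]

lemma exists_mubayiMember_isHypCopy_iff {n ℓ r : ℕ} [Nonempty (Fin n)] (hℓ : 2 ≤ ℓ)
    {H : Finset (Finset (Fin n))} :
    (∃ H₀, MubayiMember ℓ r H₀ ∧ IsHypCopy H₀ H) ↔ IsCoreHypergraph 2 ℓ r H := by
  simp only [mubayiMember_iff_isCoreHypergraph]
  constructor
  · rintro ⟨H₀, hH₀, f, hf, rfl⟩
    exact hH₀.image two_ne_zero hℓ hf
  · exact fun hH ↦ ⟨_, hH.image two_ne_zero hℓ Fin.val_injective.injOn, isHypCopy_image_val H⟩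

lemma codegreeStarIdeal_eq_iInf_span_range (k : Type*) [Field k] (n ℓ r : ℕ) :
    codegreeStarIdeal k n ℓ r = ⨅ (L : Finset (Fin n)) (_ : L.card = ℓ),
      Ideal.span (Set.range fun T : L.powersetCard 2 ↦ ∏ e ∈ codegreeStar r T.1, X e) := by
  have hstar (a b : Fin n) : starMonomial k n r a b = ∏ e ∈ codegreeStar r {a, b}, X e := by
    simp [starMonomial, codegreeStar, Finset.insert_subset_iff]
  unfold codegreeStarIdeal
  congr! with L
  ext p
  simp only [hstar, Set.mem_ofPred_eq, Set.mem_range, Subtype.exists, mem_powersetCard_two_iff]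
  constructor
  · rintro ⟨a, ha, b, hb, hab, rfl⟩
    exact ⟨{a, b}, ⟨a, ha, b, hb, hab, rfl⟩, rfl⟩
  · rintro ⟨_, ⟨a, ha, b, hb, hab, rfl⟩, rfl⟩
    exact ⟨a, ha, b, hb, hab, rfl⟩

end MubayiFamily

/-- the cover ideal of Mubayi's family `K_ℓ^{(r)}` — the intersection
over all copies `H` of members of `K_ℓ^{(r)}` of the ideals `(y_E : E ∈ H)` —
equals the missing codegree-star ideal `J^{(r)}_{n,ℓ}`. -/
theorem mubayi_coverIdeal_eq_codegreeStarIdeal (k : Type*) [Field k] (n ℓ r : ℕ)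
    (hn : 2 ≤ n) (hℓ : 2 ≤ ℓ) (hr : 2 ≤ r) :
    (⨅ (H : Finset (Finset (Fin n)))
        (_ : ∃ H₀ : Finset (Finset ℕ), MubayiMember ℓ r H₀ ∧ IsHypCopy H₀ H),
      Ideal.span {p | ∃ e : {E : Finset (Fin n) // E.card = r}, ↑e ∈ H ∧ p = X e}) =
    codegreeStarIdeal k n ℓ r := by
  have : Nonempty (Fin n) := ⟨⟨0, by omega⟩⟩
  rw [codegreeStarIdeal_eq_iInf_span_range, ← mubayi_coverIdeal_eq_codegreeStarIdeal_general]
  simp only [exists_mubayiMember_isHypCopy_iff hℓ, Set.image, Set.mem_ofPred_eq, eq_comm]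
end

section
/- Let ℓ ≥ 4 and n ≥ ℓ, set q = ℓ−1, and let m_1,…,m_{ℓ−2} be the balanced part sizes of a partition of n into ℓ−2 parts. Then ∑_{s=1}^{ℓ−2} C(m_s, 2) < 3·(C(n,3) − t_3(n, ℓ−1)). In other words, the degree of the Vandermonde-type product over a balanced (ℓ−2)-partition of [n] is strictly smaller than the minimum degree 3(C(n,3) − t_3(n,ℓ−1)) of the homogeneous generators p_G of P̂(3)(n,ℓ). -/
/-!
Write `q = ℓ - 1`, let `f` be the balanced partition of `n` into `q` parts, and `V` the number
of pairs of vertices lying in a common part of `f`. Classifying the triples that meet some part at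
least twice gives `3 (C(n,3) - t_3(n,q)) = ∑ C(f_i,2) (3n - 2 f_i - 2)`, which is at least `n V`.
Merging the two smallest parts of `f`, of sizes `a` and `b`, yields a partition into `q - 1` parts
with `V + ab` such pairs, and by convexity the balanced one has at most as many. Finally
`ab < (n - 1) V`, because `f` has a third part, of size at least `max a b` and at least `2`.
-/

/-- The `i`-th balanced part size of a partition of `n` into `q` parts. -/
def balancedPart (n q : ℕ) (i : Fin q) : ℕ :=
  n / q + if (i : ℕ) < n % q then 1 else 0

/-- `t_r(n,q) = ∑_{S ⊆ [q], |S| = r} ∏_{i ∈ S} n_i`, the number of edges of the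
complete balanced `q`-partite `r`-graph on `n` vertices. -/
def turanNum (n q r : ℕ) : ℕ :=
  ∑ S ∈ (Finset.univ : Finset (Fin q)).powersetCard r, ∏ i ∈ S, balancedPart n q i

section Choose

lemma add_choose_two (x y : ℕ) : (x + y).choose 2 = x.choose 2 + x * y + y.choose 2 := by
  rw [Nat.add_choose_eq, Finset.Nat.sum_antidiagonal_eq_sum_range_succ_mk]
  simp only [Finset.sum_range_succ, Finset.sum_range_zero, Nat.choose_zero_right,
    Nat.choose_one_right, Nat.reduceSub]
  ring

lemma add_choose_three (x y : ℕ) :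
    (x + y).choose 3 = x.choose 3 + x.choose 2 * y + x * y.choose 2 + y.choose 3 := by
  rw [Nat.add_choose_eq, Finset.Nat.sum_antidiagonal_eq_sum_range_succ_mk]
  simp only [Finset.sum_range_succ, Finset.sum_range_zero, Nat.choose_zero_right,
    Nat.choose_one_right, Nat.reduceSub]
  ring

lemma three_mul_choose_three (m : ℕ) : 3 * (m.choose 3 : ℤ) = m.choose 2 * (m - 2) := by
  obtain hm | hm := lt_or_ge m 2
  · simp [Nat.choose_eq_zero_of_lt, hm, hm.trans (Nat.lt_succ_self 2)]
  · have := congrArg (Nat.cast : ℕ → ℤ) (Nat.choose_succ_right_eq m 2)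
    push_cast [Nat.cast_sub hm] at this
    linear_combination this

lemma succ_choose_two (c : ℕ) : (c + 1).choose 2 = c.choose 2 + c := by
  simp [add_choose_two]

lemma choose_two_add_choose_succ_two (c : ℕ) : c.choose 2 + (c + 1).choose 2 = c * c := by
  induction c with
  | zero => rfl
  | succ c ih => linarith [succ_choose_two c, succ_choose_two (c + 1)]

/-- The tangent line to `m ↦ C(m,2)` that touches it at `m = c` and `m = c + 1`. -/
lemma mul_le_choose_two_add_choose_two (c m : ℕ) :
    c * m ≤ m.choose 2 + (c + 1).choose 2 := by
  obtain h | h := le_total c m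
  · obtain ⟨d, rfl⟩ := Nat.exists_eq_add_of_le h
    rw [add_choose_two]
    linarith [choose_two_add_choose_succ_two c, Nat.zero_le (d.choose 2)]
  · obtain ⟨d, rfl⟩ := Nat.exists_eq_add_of_le h
    rw [add_assoc, add_choose_two]
    linarith [choose_two_add_choose_succ_two m, succ_choose_two m, Nat.zero_le ((d + 1).choose 2)]

end Choose

section ElementarySymmetric

variable {ι : Type*}

lemma sum_powersetCard_insert_prod {R : Type*} [CommSemiring R] [DecidableEq ι] {s : Finset ι}
    {a : ι} (ha : a ∉ s) (f : ι → R) (k : ℕ) :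
    ∑ t ∈ (insert a s).powersetCard (k + 1), ∏ i ∈ t, f i =
      ∑ t ∈ s.powersetCard (k + 1), ∏ i ∈ t, f i +
        f a * ∑ t ∈ s.powersetCard k, ∏ i ∈ t, f i := by
  simp only [← Finset.esymm_map_val, Finset.insert_val_of_notMem ha, Multiset.map_cons,
    Multiset.esymm, Multiset.powersetCard_cons, Multiset.map_add, Multiset.sum_add,
    Multiset.map_map, Function.comp_def, Multiset.prod_cons, Multiset.sum_map_mul_left]

lemma choose_two_sum (s : Finset ι) (f : ι → ℕ) :
    (∑ i ∈ s, f i).choose 2 =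
      ∑ t ∈ s.powersetCard 2, ∏ i ∈ t, f i + ∑ i ∈ s, (f i).choose 2 := by
  classical
  induction s using Finset.induction_on with
  | empty => simp [Finset.powersetCard_eq_empty.2 (Finset.card_empty.trans_lt two_pos)]
  | insert a s ha ih =>
    rw [Finset.sum_insert ha, Finset.sum_insert ha, sum_powersetCard_insert_prod ha,
      add_choose_two, ih]
    simp only [Finset.powersetCard_one, Finset.sum_map, Function.Embedding.coeFn_mk,
      Finset.prod_singleton]
    ring

/-- A triple that is not transversal has either exactly two or all three vertices in one part. -/
lemma choose_three_sum (s : Finset ι) (f : ι → ℕ) :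
    ((∑ i ∈ s, f i).choose 3 : ℤ) = ∑ t ∈ s.powersetCard 3, ∏ i ∈ t, (f i : ℤ) +
      ∑ i ∈ s, ((f i).choose 2 * (∑ j ∈ s, (f j : ℤ) - f i) + (f i).choose 3) := by
  classical
  induction s using Finset.induction_on with
  | empty => simp [Finset.powersetCard_eq_empty.2 (Finset.card_empty.trans_lt three_pos)]
  | insert a s ha ih =>
    have pairs := congrArg (Nat.cast : ℕ → ℤ) (choose_two_sum s f)
    push_cast at pairs
    have shift : ∑ i ∈ s, (((f i).choose 2 : ℤ) * (f a + ∑ j ∈ s, (f j : ℤ) - f i) +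
          (f i).choose 3) =
        f a * ∑ i ∈ s, ((f i).choose 2 : ℤ) +
          ∑ i ∈ s, (((f i).choose 2 : ℤ) * (∑ j ∈ s, (f j : ℤ) - f i) + (f i).choose 3) := by
      rw [Finset.mul_sum, ← Finset.sum_add_distrib]
      exact Finset.sum_congr rfl fun i _ ↦ by ring
    simp only [Finset.sum_insert ha, sum_powersetCard_insert_prod ha, add_choose_three, shift]
    push_cast
    linear_combination ih + (f a : ℤ) * pairs

lemma sum_mul_sum_choose_two_le (s : Finset ι) (f : ι → ℕ) (hf : ∀ i ∈ s, f i < ∑ j ∈ s, f j) :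
    ((∑ i ∈ s, f i : ℕ) : ℤ) * ∑ i ∈ s, ((f i).choose 2 : ℤ) ≤
      3 * (((∑ i ∈ s, f i).choose 3 : ℤ) - ∑ t ∈ s.powersetCard 3, ∏ i ∈ t, (f i : ℤ)) := by
  rw [choose_three_sum, add_sub_cancel_left, Finset.mul_sum, Finset.mul_sum]
  refine Finset.sum_le_sum fun i hi ↦ ?_
  have hlt : (f i : ℤ) + 1 ≤ ∑ j ∈ s, (f j : ℤ) := by exact_mod_cast hf i hi
  push_cast
  calc (∑ j ∈ s, (f j : ℤ)) * (f i).choose 2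
      ≤ (3 * (∑ j ∈ s, (f j : ℤ) - f i) + (f i - 2)) * (f i).choose 2 := by gcongr; linarith
    _ = 3 * ((f i).choose 2 * (∑ j ∈ s, (f j : ℤ) - f i) + (f i).choose 3) := by
        linear_combination -three_mul_choose_three (f i)

lemma mul_add_sum_choose_two_lt {s : Finset ι} {f : ι → ℕ} {i j k : ι}
    (hi : i ∈ s) (hj : j ∈ s) (hk : k ∈ s) (hij : i ≠ j) (hik : i ≠ k) (hjk : j ≠ k)
    (hfi : f i ≤ f k) (hfj : f j ≤ f k) (hfk : 2 ≤ f k) :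
    f i * f j + ∑ x ∈ s, (f x).choose 2 < (∑ x ∈ s, f x) * ∑ x ∈ s, (f x).choose 2 := by
  classical
  have hsum : f i + f j + f k ≤ ∑ x ∈ s, f x := by
    calc f i + f j + f k = ∑ x ∈ {i, j, k}, f x := by
          rw [Finset.sum_insert (by simp [hij, hik]), Finset.sum_pair hjk, add_assoc]
      _ ≤ ∑ x ∈ s, f x := Finset.sum_le_sum_of_subset (by simp [Finset.insert_subset_iff, *])
  have hchoose : (f k).choose 2 ≤ ∑ x ∈ s, (f x).choose 2 :=
    Finset.single_le_sum (f := fun x ↦ (f x).choose 2) (fun _ _ ↦ Nat.zero_le _) hk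
  have hk_le : f k ≤ 2 * (f k).choose 2 := by
    have := mul_le_choose_two_add_choose_two 1 (f k)
    have : f k ≤ (f k).choose 2 + 1 := by simpa using this
    omega
  generalize ∑ x ∈ s, (f x).choose 2 = V at *
  have hV : 0 < V := by omega
  have hmul : 2 * (f i * f j) ≤ 2 * ((f i + f j) * V) := by
    have hi_le : f i ≤ 2 * V := by omega
    have hj_le : f j ≤ 2 * V := by omega
    calc 2 * (f i * f j) = f i * f j + f j * f i := by ring
      _ ≤ f i * (2 * V) + f j * (2 * V) :=
          add_le_add (Nat.mul_le_mul_left _ hj_le) (Nat.mul_le_mul_left _ hi_le)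
      _ = 2 * ((f i + f j) * V) := by ring
  calc f i * f j + V ≤ (f i + f j) * V + V := by linarith
    _ = (f i + f j + 1) * V := by ring
    _ < (∑ x ∈ s, f x) * V := by gcongr; omega

end ElementarySymmetric

section BalancedPart

variable {n q : ℕ}

lemma sum_balancedPart (hq : q ≠ 0) : ∑ i, balancedPart n q i = n := by
  have hmod : n % q ≤ q := (Nat.mod_lt n (Nat.pos_of_ne_zero hq)).le
  simp [balancedPart, Finset.sum_add_distrib, Fin.card_filter_val_lt, hmod, Nat.div_add_mod]

lemma balancedPart_antitone : Antitone (balancedPart n q) := by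
  intro i j hij
  have : (i : ℕ) ≤ j := hij
  unfold balancedPart
  split_ifs <;> omega

lemma balancedPart_lt (hq : 2 ≤ q) (hn : 3 ≤ n) (i : Fin q) : balancedPart n q i < n := by
  have hdiv : n / q ≤ n / 2 := Nat.div_le_div_left hq two_pos
  unfold balancedPart
  split_ifs <;> omega

lemma two_le_balancedPart_zero (h : q + 1 < n) : 2 ≤ balancedPart n (q + 1) 0 := by
  have hsum : ∑ _i : Fin (q + 1), 1 < ∑ i, balancedPart n (q + 1) i := by
    simpa [sum_balancedPart] using h
  obtain ⟨i, -, hi⟩ := Finset.exists_lt_of_sum_lt hsum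
  exact hi.trans_le (balancedPart_antitone (Fin.zero_le i))

lemma choose_two_balancedPart_add_choose_two (i : Fin q) :
    (balancedPart n q i).choose 2 + (n / q + 1).choose 2 = n / q * balancedPart n q i := by
  have at_div := choose_two_add_choose_succ_two (n / q)
  unfold balancedPart
  split_ifs
  · linarith [succ_choose_two (n / q)]
  · exact at_div

lemma sum_choose_two_balancedPart_le (f : Fin q → ℕ) :
    ∑ i, (balancedPart (∑ j, f j) q i).choose 2 ≤ ∑ i, (f i).choose 2 := by
  obtain rfl | hq := eq_or_ne q 0
  · simp
  generalize hn : ∑ j, f j = n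
  have key : ∑ i, ((balancedPart n q i).choose 2 + (n / q + 1).choose 2) ≤
      ∑ i, ((f i).choose 2 + (n / q + 1).choose 2) := by
    calc ∑ i, ((balancedPart n q i).choose 2 + (n / q + 1).choose 2)
        = ∑ i, n / q * balancedPart n q i :=
          Finset.sum_congr rfl fun i _ ↦ choose_two_balancedPart_add_choose_two i
      _ = ∑ i, n / q * f i := by
          rw [← Finset.mul_sum, ← Finset.mul_sum, sum_balancedPart hq, hn]
      _ ≤ ∑ i, ((f i).choose 2 + (n / q + 1).choose 2) :=
          Finset.sum_le_sum fun i _ ↦ mul_le_choose_two_add_choose_two (n / q) (f i)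
  simpa only [Finset.sum_add_distrib, add_le_add_iff_right] using key

lemma sum_choose_two_balancedPart_le_add_mul (f : Fin (q + 2) → ℕ) :
    ∑ i, (balancedPart (∑ j, f j) (q + 1) i).choose 2 ≤
      f (Fin.last q).castSucc * f (Fin.last (q + 1)) + ∑ i, (f i).choose 2 := by
  set a := f (Fin.last q).castSucc
  set b := f (Fin.last (q + 1))
  let merged : Fin (q + 1) → ℕ := Fin.snoc (fun i : Fin q ↦ f i.castSucc.castSucc) (a + b)
  have sum_merged : ∑ i, merged i = ∑ i, f i := by
    simp [merged, Fin.sum_univ_castSucc, a, b, add_assoc]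
  calc ∑ i, (balancedPart (∑ j, f j) (q + 1) i).choose 2
      ≤ ∑ i, (merged i).choose 2 := sum_merged ▸ sum_choose_two_balancedPart_le merged
    _ = a * b + ∑ i, (f i).choose 2 := by
        simp only [Fin.sum_univ_castSucc, Fin.snoc_castSucc, Fin.snoc_last, add_choose_two,
          merged, a, b]
        ring

lemma sum_choose_two_balancedPart_lt_mul (hq : 1 ≤ q) (hn : q + 2 < n) :
    ∑ i, (balancedPart n (q + 1) i).choose 2 < n * ∑ i, (balancedPart n (q + 2) i).choose 2 := by
  set f := balancedPart n (q + 2)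
  have hsum : ∑ i, f i = n := sum_balancedPart (by omega)
  have le_f_zero (i) : f i ≤ f 0 := balancedPart_antitone (Fin.zero_le i)
  calc ∑ i, (balancedPart n (q + 1) i).choose 2
      ≤ f (Fin.last q).castSucc * f (Fin.last (q + 1)) + ∑ i, (f i).choose 2 :=
        hsum ▸ sum_choose_two_balancedPart_le_add_mul f
    _ < (∑ i, f i) * ∑ i, (f i).choose 2 :=
        mul_add_sum_choose_two_lt (Finset.mem_univ _) (Finset.mem_univ _) (Finset.mem_univ 0)
          (Fin.ne_of_val_ne (show q ≠ q + 1 by omega)) (Fin.ne_of_val_ne (show q ≠ 0 by omega))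
          (Fin.ne_of_val_ne (show q + 1 ≠ 0 by omega)) (le_f_zero _) (le_f_zero _)
          (two_le_balancedPart_zero hn)
    _ = n * ∑ i, (f i).choose 2 := by rw [hsum]

lemma mul_sum_choose_two_balancedPart_le (hq : 2 ≤ q) (hn : 3 ≤ n) :
    (n : ℤ) * ∑ i, ((balancedPart n q i).choose 2 : ℤ) ≤
      3 * ((n.choose 3 : ℤ) - (turanNum n q 3 : ℤ)) := by
  have hsum : ∑ i, balancedPart n q i = n := sum_balancedPart (by omega)
  have bound := sum_mul_sum_choose_two_le Finset.univ (balancedPart n q) fun i _ ↦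
    hsum.symm ▸ balancedPart_lt hq hn i
  rw [hsum] at bound
  simpa only [turanNum, Nat.cast_sum, Nat.cast_prod] using bound

end BalancedPart

/-- for `ℓ ≥ 4` and `n ≥ ℓ`, if `m_1, …, m_{ℓ-2}` are the balanced
part sizes of a partition of `n` into `ℓ-2` parts, then
`∑_s C(m_s,2) < 3·(C(n,3) - t_3(n,ℓ-1))`: the degree of the Vandermonde-type
product over a balanced `(ℓ-2)`-partition is strictly smaller than the minimum
degree of the homogeneous generators `p_G` of `P̂(3)(n,ℓ)`. -/
theorem vandermonde_degree_lt_generator_degree (n ℓ : ℕ) (hℓ : 4 ≤ ℓ) (hn : ℓ ≤ n) :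
    (∑ s : Fin (ℓ - 2), (Nat.choose (balancedPart n (ℓ - 2) s) 2 : ℤ)) <
      3 * ((Nat.choose n 3 : ℤ) - (turanNum n (ℓ - 1) 3 : ℤ)) := by
  obtain ⟨q, rfl⟩ := Nat.exists_eq_add_of_le' (show 3 ≤ ℓ by omega)
  change ∑ s : Fin (q + 1), ((balancedPart n (q + 1) s).choose 2 : ℤ) <
    3 * ((n.choose 3 : ℤ) - (turanNum n (q + 2) 3 : ℤ))
  calc ∑ s, ((balancedPart n (q + 1) s).choose 2 : ℤ)
      < n * ∑ i, ((balancedPart n (q + 2) i).choose 2 : ℤ) := by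
        exact_mod_cast sum_choose_two_balancedPart_lt_mul (by omega) (by omega)
    _ ≤ 3 * ((n.choose 3 : ℤ) - (turanNum n (q + 2) 3 : ℤ)) :=
        mul_sum_choose_two_balancedPart_le (by omega) (by omega)
end
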